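/- Main symmetry theorem: Let α ∈ (0,2) and let (u,v) ∈ (L_α ∩ C^{1,1}_{loc}(ℝ^n))² be a positive solution of (−Δ)^{α/2}u = f(u,v), (−Δ)^{α/2}v = g(u,v) with f, g ∈ C¹([0,∞)², ℝ). Assume (i) u(x) ≲ |x|^{−a}, v(x) ≲ |x|^{−b} as |x| → ∞ (a,b > 0); (ii) ∂f/∂u ≲ u^{p−1}v^q, ∂g/∂v ≲ u^r v^{s−1} as (u,v) → (0⁺,0⁺); (iii) ∂f/∂v ≲ u^p v^{q−1}, ∂g/∂u ≲ u^{r−1}v^s as (u,v) → (0⁺,0⁺); (iv) ∂f/∂v > 0 and ∂g/∂u > 0 on (0,∞)²; (v) α < min{ap+bq−a, ap+bq−b, ar+bs−a, ar+bs−b}, with p,q,r,s ≥ 1. Then there exists x₀ ∈ ℝ^n such that u and v are radially symmetric about x₀, i.e. u(x) and v(x) depend only on |x − x₀|. -/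

import Mathlib

open Set MeasureTheory Filter

/-- `F x` is the value of the principal-value fractional Laplacian
`(−Δ)^{α/2} u` (with normalizing constant `C`) at every point `x`. -/
def IsFracLap (n : ℕ) (α C : ℝ) (u F : EuclideanSpace ℝ (Fin n) → ℝ) : Prop :=
  ∀ x, Tendsto
    (fun ε : ℝ => C * ∫ y in {y : EuclideanSpace ℝ (Fin n) | ε ≤ dist x y},
      (u x - u y) / dist x y ^ ((n : ℝ) + α))
    (nhdsWithin 0 (Ioi 0)) (nhds (F x))

/-- Membership in the space `L_α`. -/
def MemLalpha (n : ℕ) (α : ℝ) (u : EuclideanSpace ℝ (Fin n) → ℝ) : Prop :=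
  Integrable (fun x : EuclideanSpace ℝ (Fin n) => |u x| / (1 + ‖x‖ ^ ((n : ℝ) + α)))

/-- `C^{1,1}_{loc}` regularity: `C¹` with locally Lipschitz derivative. -/
def C11loc {n : ℕ} (u : EuclideanSpace ℝ (Fin n) → ℝ) : Prop :=
  ContDiff ℝ 1 u ∧ LocallyLipschitz (fderiv ℝ u)

/-!
Moving planes. For a unit vector `e` and a level `l` let `σ` be the reflection across the
hyperplane `⟪e, ·⟫ = l`, and consider the antisymmetric functions `U = u ∘ σ - u` and
`V = v ∘ σ - v` on the half-space `⟪e, ·⟫ ≤ l`. Folding the singular integral onto the half-space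
shows that, at a negative minimum of `U` at distance `δ` from the hyperplane,
`(-Δ)^{α/2} U ≤ c δ^{-α} U` with a constant `c > 0`. At a negative minimum of `min U V` the
equations and the monotonicity of the coupling give `(-Δ)^{α/2} U ≥ K U`, where `K` is bounded and,
by decay and the condition on the exponents, is `o(|x|^{-α})`. So negative minima occur neither
near the hyperplane nor near infinity, and hence `U, V ≥ 0` for `l` near `-∞`. At the largest level
up to which `U, V ≥ 0` persists, the strong maximum principle makes `U` and `V` either both vanish
or both positive inside the half-space, and in the latter case compactness would allow moving the
plane further. Thus every direction has a common symmetry hyperplane of `u` and `v`. All of these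
pass through the centroid of the compactly supported truncation `(u - u(0) / 2)⁺`, so `u` and `v`
are radially symmetric about it.
-/

open scoped Topology RealInnerProductSpace
open Metric (ball)
open Module (finrank)

section PlaneReflection

variable {E : Type*} [NormedAddCommGroup E] [InnerProductSpace ℝ E] {e : E}

/-- Reflection across the hyperplane `⟪e, x⟫ = l` with unit normal `e`. Composing the linear
reflection with a translation makes it an isometry whether or not `‖e‖ = 1`. -/
noncomputable def planeReflection (e : E) (l : ℝ) : E ≃ᵢ E :=
  (ℝ ∙ e)ᗮ.reflection.toIsometryEquiv.trans (IsometryEquiv.addRight ((2 * l) • e))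

lemma planeReflection_apply (he : ‖e‖ = 1) (l : ℝ) (x : E) :
    planeReflection e l x = x + (2 * (l - ⟪e, x⟫)) • e := by
  have : planeReflection e l x = (ℝ ∙ e)ᗮ.reflection x + (2 * l) • e := rfl
  rw [this, Submodule.reflection_orthogonal_apply, Submodule.reflection_singleton_apply, he]
  simp only [RCLike.ofReal_real_eq_id, id, one_pow, div_one]
  module

lemma inner_planeReflection (he : ‖e‖ = 1) (l : ℝ) (x : E) :
    ⟪e, planeReflection e l x⟫ = 2 * l - ⟪e, x⟫ := by
  rw [planeReflection_apply he, inner_add_right, inner_smul_right, real_inner_self_eq_norm_sq, he]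
  ring

lemma planeReflection_planeReflection (he : ‖e‖ = 1) (l : ℝ) (x : E) :
    planeReflection e l (planeReflection e l x) = x := by
  rw [planeReflection_apply he l (planeReflection e l x), inner_planeReflection he,
    planeReflection_apply he]
  module

lemma planeReflection_eq_self (he : ‖e‖ = 1) {l : ℝ} {x : E} (hx : ⟪e, x⟫ = l) :
    planeReflection e l x = x := by
  simp [planeReflection_apply he, hx]

lemma continuous_planeReflection_uncurry :
    Continuous fun z : ℝ × E => planeReflection e z.1 z.2 :=
  ((ℝ ∙ e)ᗮ.reflection.continuous.comp continuous_snd).add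
    (by fun_prop : Continuous fun z : ℝ × E => (2 * z.1) • e)

lemma exists_planeReflection_eq {x₀ x y : E} (hne : x ≠ y) (h : ‖x - x₀‖ = ‖y - x₀‖) :
    ∃ e : E, ‖e‖ = 1 ∧ planeReflection e ⟪e, x₀⟫ x = y := by
  have hxy : ‖x - y‖ ≠ 0 := norm_ne_zero_iff.2 (sub_ne_zero.2 hne)
  set e : E := ‖x - y‖⁻¹ • (x - y) with he_def
  have he : ‖e‖ = 1 := by rw [he_def, norm_smul, norm_inv, norm_norm, inv_mul_cancel₀ hxy]
  have hspan : (ℝ ∙ e) = ℝ ∙ ((x - x₀) - (y - x₀)) := by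
    rw [he_def, Submodule.span_singleton_smul_eq (IsUnit.mk0 _ (inv_ne_zero hxy)),
      sub_sub_sub_cancel_right]
  have hlin : (ℝ ∙ e)ᗮ.reflection (x - x₀) = y - x₀ := by
    simp only [hspan, Submodule.reflection_sub h]
  refine ⟨e, he, ?_⟩
  have hx₀ := planeReflection_eq_self he (rfl : ⟪e, x₀⟫ = ⟪e, x₀⟫)
  change (ℝ ∙ e)ᗮ.reflection x₀ + _ = x₀ at hx₀
  change (ℝ ∙ e)ᗮ.reflection x + _ = y
  rw [map_sub, sub_eq_iff_eq_add] at hlin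
  rw [hlin, add_assoc, hx₀, sub_add_cancel]

lemma dist_planeReflection_sq (he : ‖e‖ = 1) (l : ℝ) (x y : E) :
    dist x (planeReflection e l y) ^ 2 =
      dist x y ^ 2 + 4 * ((l - ⟪e, x⟫) * (l - ⟪e, y⟫)) := by
  rw [planeReflection_apply he, dist_eq_norm, dist_eq_norm, ← sub_sub, norm_sub_sq_real,
    inner_smul_right, norm_smul, he, real_inner_comm e (x - y), inner_sub_right, mul_one,
    Real.norm_eq_abs, sq_abs]
  ring

lemma dist_le_dist_planeReflection (he : ‖e‖ = 1) {l : ℝ} {x y : E}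
    (hx : ⟪e, x⟫ ≤ l) (hy : ⟪e, y⟫ ≤ l) : dist x y ≤ dist x (planeReflection e l y) := by
  refine (pow_le_pow_iff_left₀ dist_nonneg dist_nonneg two_ne_zero).1 ?_
  linarith [dist_planeReflection_sq he l x y, mul_nonneg (sub_nonneg.2 hx) (sub_nonneg.2 hy)]

lemma dist_lt_dist_planeReflection (he : ‖e‖ = 1) {l : ℝ} {x y : E}
    (hx : ⟪e, x⟫ < l) (hy : ⟪e, y⟫ < l) : dist x y < dist x (planeReflection e l y) := by
  refine (pow_lt_pow_iff_left₀ dist_nonneg dist_nonneg two_ne_zero).1 ?_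
  linarith [dist_planeReflection_sq he l x y, mul_pos (sub_pos.2 hx) (sub_pos.2 hy)]

lemma dist_planeReflection_self (he : ‖e‖ = 1) {l : ℝ} {x : E} (hx : ⟪e, x⟫ ≤ l) :
    dist x (planeReflection e l x) = 2 * (l - ⟪e, x⟫) := by
  refine (pow_left_inj₀ dist_nonneg (by linarith) two_ne_zero).1 ?_
  rw [dist_planeReflection_sq he, dist_self]
  ring

lemma inner_sub_inner_le_dist (he : ‖e‖ = 1) (x y : E) : ⟪e, y⟫ - ⟪e, x⟫ ≤ dist x y := by
  rw [← inner_sub_right, dist_comm, dist_eq_norm]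
  simpa [he] using real_inner_le_norm e (y - x)

lemma sub_inner_le_dist_planeReflection (he : ‖e‖ = 1) {l : ℝ} {x y : E} (hy : ⟪e, y⟫ ≤ l) :
    l - ⟪e, x⟫ ≤ dist x (planeReflection e l y) := by
  linarith [inner_sub_inner_le_dist he x (planeReflection e l y), inner_planeReflection he l y]

lemma inner_lt_of_mem_ball (he : ‖e‖ = 1) {l : ℝ} {x y : E} (hy : y ∈ ball x (l - ⟪e, x⟫)) :
    ⟪e, y⟫ < l := by
  linarith [inner_sub_inner_le_dist he x y, Metric.mem_ball'.1 hy]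

/-- The difference `u ∘ σ - u` between `u` and its reflection `u ∘ σ`: the function `U_λ` of the
method of moving planes, with `λ = l`. -/
noncomputable def reflectionDiff (e : E) (l : ℝ) (u : E → ℝ) (x : E) : ℝ :=
  u (planeReflection e l x) - u x

lemma reflectionDiff_planeReflection (he : ‖e‖ = 1) (l : ℝ) (u : E → ℝ) (x : E) :
    reflectionDiff e l u (planeReflection e l x) = -reflectionDiff e l u x := by
  simp only [reflectionDiff, planeReflection_planeReflection he, neg_sub]

lemma continuous_reflectionDiff {u : E → ℝ} (hu : Continuous u) (l : ℝ) :
    Continuous (reflectionDiff e l u) :=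
  (hu.comp (planeReflection e l).continuous).sub hu

lemma tendsto_reflectionDiff_cocompact {u : E → ℝ} (hu : Tendsto u (cocompact E) (𝓝 0)) (l : ℝ) :
    Tendsto (reflectionDiff e l u) (cocompact E) (𝓝 0) := by
  have hσ := (planeReflection e l).toHomeomorph.isClosedEmbedding.tendsto_cocompact
  rw [← sub_zero (0 : ℝ)]
  exact (hu.comp hσ).sub hu

end PlaneReflection

section Integration

variable {E : Type*} [NormedAddCommGroup E] [InnerProductSpace ℝ E] [FiniteDimensional ℝ E]
  [MeasurableSpace E] [BorelSpace E] {e : E} {l : ℝ}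

lemma measurePreserving_isometryEquiv (φ : E ≃ᵢ E) : MeasurePreserving φ := by
  simpa only [InnerProductSpace.euclideanHausdorffMeasure_eq_volume] using
    φ.measurePreserving_euclideanHausdorffMeasure (finrank ℝ E)

lemma integral_comp_isometryEquiv {F : Type*} [NormedAddCommGroup F] [NormedSpace ℝ F]
    (φ : E ≃ᵢ E) (h : E → F) : ∫ y, h (φ y) = ∫ y, h y :=
  (measurePreserving_isometryEquiv φ).integral_comp φ.toHomeomorph.measurableEmbedding h

lemma integral_le_of_add_comp_planeReflection_le (he : ‖e‖ = 1) {g b : E → ℝ}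
    (hg : Integrable g) (hb : Integrable b) (hb0 : ∀ y, l ≤ ⟪e, y⟫ → b y = 0)
    (hgb : ∀ y, ⟪e, y⟫ ≤ l → g y + g (planeReflection e l y) ≤ b y) :
    ∫ y, g y ≤ ∫ y, b y := by
  have hσ := measurePreserving_isometryEquiv (planeReflection e l)
  have hgσ : Integrable (g ∘ planeReflection e l) := hσ.integrable_comp_of_integrable hg
  have hbσ : Integrable (b ∘ planeReflection e l) := hσ.integrable_comp_of_integrable hb
  have hle : ∀ y, g y + (g ∘ planeReflection e l) y ≤ b y + (b ∘ planeReflection e l) y := by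
    intro y
    have hinner := inner_planeReflection he l y
    rcases le_total ⟪e, y⟫ l with hy | hy
    · simpa [hb0 _ (by linarith : l ≤ ⟪e, planeReflection e l y⟫)] using hgb y hy
    · simpa [hb0 y hy, planeReflection_planeReflection he, add_comm] using
        hgb (planeReflection e l y) (by linarith)
  have hint := integral_mono (hg.add hgσ) (hb.add hbσ) hle
  simp only [Pi.add_apply] at hint
  rw [integral_add hg hgσ, integral_add hb hbσ] at hint
  simp only [Function.comp_apply, integral_comp_isometryEquiv] at hint
  linarith

lemma inner_centroid_eq_of_comp_planeReflection_eq (he : ‖e‖ = 1) {w : E → ℝ}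
    (hw : Integrable w) (hwy : Integrable fun y => w y • y) (hw0 : ∫ y, w y ≠ 0)
    (hsym : ∀ y, w (planeReflection e l y) = w y) :
    ⟪e, (∫ y, w y)⁻¹ • ∫ y, w y • y⟫ = l := by
  have hswap : ∫ y, w y * ⟪e, y⟫ = ∫ y, w y * (2 * l - ⟪e, y⟫) := by
    rw [← integral_comp_isometryEquiv (planeReflection e l)]
    simp only [hsym, inner_planeReflection he]
  have hinner : Integrable fun y => w y * ⟪e, y⟫ := by
    simpa only [inner_smul_right] using hwy.const_inner (𝕜 := ℝ) e
  have hmoment : ∫ y, w y * ⟪e, y⟫ = l * ∫ y, w y := by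
    simp_rw [mul_sub, mul_comm (w _) (2 * l)] at hswap
    rw [integral_sub (hw.const_mul _) hinner, integral_const_mul] at hswap
    linarith
  rw [inner_smul_right, ← integral_inner hwy]
  simp only [inner_smul_right, hmoment]
  field_simp

lemma exists_mem_forall_symmetry_plane {u : E → ℝ} (hu : Continuous u) (hu0 : 0 < u 0)
    (hlim : Tendsto u (cocompact E) (𝓝 0)) :
    ∃ x₀ : E, ∀ (e : E) (l : ℝ), ‖e‖ = 1 → (∀ x, u (planeReflection e l x) = u x) →
      ⟪e, x₀⟫ = l := by
  -- The truncation `(u - u 0 / 2)⁺` has compact support, hence a centroid.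
  set w : E → ℝ := fun x => max (u x - u 0 / 2) 0 with hw_def
  have hwc : Continuous w := by fun_prop
  have hws : HasCompactSupport w := by
    obtain ⟨K, hK, hKu⟩ := mem_cocompact.1 (hlim.eventually (gt_mem_nhds (half_pos hu0)))
    exact HasCompactSupport.intro hK fun x hx => max_eq_right (sub_nonpos.2 (hKu hx).le)
  have hw : Integrable w := hwc.integrable_of_hasCompactSupport hws
  have hwy : Integrable fun y => w y • y :=
    (hwc.smul continuous_id).integrable_of_hasCompactSupport hws.smul_right
  have hwpos : 0 < ∫ y, w y := by
    have hw0 : 0 < w 0 := lt_max_of_lt_left (by linarith)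
    exact integral_pos_of_integrable_nonneg_nonzero hwc hw (fun x => le_max_right _ _) hw0.ne'
  refine ⟨(∫ y, w y)⁻¹ • ∫ y, w y • y, fun e l he hsym =>
    inner_centroid_eq_of_comp_planeReflection_eq he hw hwy hwpos.ne' ?_⟩
  intro y
  simp only [hw_def, hsym]

end Integration

section FracKernel

variable {E : Type*} [NormedAddCommGroup E] [InnerProductSpace ℝ E] {α : ℝ} {x y z : E}

/-- The kernel `|x - y|^{-(n + α)}` of the fractional Laplacian on an `n`-dimensional space. -/
noncomputable def fracKernel (α : ℝ) (x y : E) : ℝ :=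
  (dist x y ^ ((finrank ℝ E : ℝ) + α))⁻¹

lemma fracKernel_nonneg (α : ℝ) (x y : E) : 0 ≤ fracKernel α x y := by
  unfold fracKernel
  positivity

lemma fracKernel_le_inv_rpow (hα : 0 < α) {r : ℝ} (hr : 0 < r) (h : r ≤ dist x y) :
    fracKernel α x y ≤ (r ^ ((finrank ℝ E : ℝ) + α))⁻¹ := by
  unfold fracKernel
  gcongr

lemma inv_rpow_le_fracKernel (hα : 0 < α) {r : ℝ} (hxy : x ≠ y) (h : dist x y ≤ r) :
    (r ^ ((finrank ℝ E : ℝ) + α))⁻¹ ≤ fracKernel α x y := by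
  have := dist_pos.2 hxy
  unfold fracKernel
  gcongr

lemma fracKernel_lt_fracKernel (hα : 0 < α) (hxy : x ≠ y) (h : dist x y < dist x z) :
    fracKernel α x z < fracKernel α x y := by
  have := dist_pos.2 hxy
  unfold fracKernel
  gcongr

lemma fracKernel_isometryEquiv (φ : E ≃ᵢ E) : fracKernel α (φ x) (φ y) = fracKernel α x y := by
  simp only [fracKernel, φ.dist_eq]

lemma continuousAt_fracKernel (hxy : x ≠ y) : ContinuousAt (fracKernel α x) y := by
  have := (dist_pos.2 hxy).ne'
  unfold fracKernel
  fun_prop (disch := simp_all [Real.rpow_eq_zero_iff_of_nonneg])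

lemma fracKernel_le_one_add_norm (hα : 0 < α) {ε : ℝ} (hε : 0 < ε) (h : ε ≤ dist x y) :
    fracKernel α x y ≤ ((1 + ε) / ε) ^ ((finrank ℝ E : ℝ) + α) *
      (1 + ‖y - x‖) ^ (-((finrank ℝ E : ℝ) + α)) := by
  have hxy : 0 < dist x y := hε.trans_le h
  rw [Real.rpow_neg (by positivity), ← div_eq_mul_inv, ← Real.div_rpow (by positivity)
    (by positivity), fracKernel, ← Real.inv_rpow hxy.le, ← dist_eq_norm, dist_comm y x]
  gcongr
  rw [inv_eq_one_div, div_div, div_le_div_iff₀ hxy (by positivity)]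
  linarith

end FracKernel

section FractionalLaplacian

variable {E : Type*} [NormedAddCommGroup E] [InnerProductSpace ℝ E]
  [MeasurableSpace E] [BorelSpace E] {e x : E} {l α C L M N : ℝ} {u v : E → ℝ}

/-- `L` is the value at `x` of the principal-value fractional Laplacian `(-Δ)^{α/2} u` with
normalizing constant `C`: the pointwise form of `IsFracLap`, on any inner product space. -/
def HasFracLapAt [FiniteDimensional ℝ E] (α C : ℝ) (u : E → ℝ) (L : ℝ) (x : E) : Prop :=
  Tendsto (fun ε => C * ∫ y in {y | ε ≤ dist x y}, (u x - u y) * fracKernel α x y)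
    (𝓝[>] 0) (𝓝 L)

lemma measurable_fracKernel (α : ℝ) (x : E) : Measurable (fracKernel α x) := by
  unfold fracKernel
  fun_prop

variable [FiniteDimensional ℝ E]

lemma IsFracLap.hasFracLapAt {n : ℕ} {u F : EuclideanSpace ℝ (Fin n) → ℝ}
    (h : IsFracLap n α C u F) (x : EuclideanSpace ℝ (Fin n)) : HasFracLapAt α C u (F x) x := by
  simpa only [HasFracLapAt, fracKernel, finrank_euclideanSpace_fin, ← div_eq_mul_inv] using h x

lemma integrableOn_fracKernel (hα : 0 < α) (x : E) {ε : ℝ} (hε : 0 < ε) :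
    IntegrableOn (fracKernel α x) {y | ε ≤ dist x y} := by
  have hint : Integrable fun y : E => (1 + ‖y - x‖) ^ (-((finrank ℝ E : ℝ) + α)) :=
    (integrable_one_add_norm (lt_add_of_pos_right _ hα)).comp_sub_right x
  refine ((hint.const_mul (((1 + ε) / ε) ^ ((finrank ℝ E : ℝ) + α))).integrableOn).mono'
    (measurable_fracKernel α x).aestronglyMeasurable ?_
  filter_upwards [ae_restrict_mem (measurableSet_le measurable_const (by fun_prop))] with y hy
  rw [Real.norm_of_nonneg (fracKernel_nonneg α x y)]
  exact fracKernel_le_one_add_norm hα hε hy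

lemma integrableOn_sub_mul_fracKernel (hα : 0 < α) (hu : Continuous u) (hM : ∀ y, |u y| ≤ M)
    (x : E) {ε : ℝ} (hε : 0 < ε) :
    IntegrableOn (fun y => (u x - u y) * fracKernel α x y) {y | ε ≤ dist x y} :=
  (integrableOn_fracKernel hα x hε).bdd_mul (by fun_prop : Continuous _).aestronglyMeasurable
    (.of_forall fun y => (abs_sub (u x) (u y)).trans (add_le_add (hM x) (hM y)))

lemma HasFracLapAt.sub {L' : ℝ} (hα : 0 < α) (hu : Continuous u) (hv : Continuous v)
    (hM : ∀ y, |u y| ≤ M) (hN : ∀ y, |v y| ≤ N)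
    (h : HasFracLapAt α C u L x) (h' : HasFracLapAt α C v L' x) :
    HasFracLapAt α C (fun y => u y - v y) (L - L') x := by
  refine (Tendsto.sub h h').congr' ?_
  filter_upwards [self_mem_nhdsWithin] with ε hε
  rw [← mul_sub, ← integral_sub (integrableOn_sub_mul_fracKernel hα hu hM x hε)
    (integrableOn_sub_mul_fracKernel hα hv hN x hε)]
  congr 2 with y
  ring

lemma HasFracLapAt.comp_isometryEquiv (φ : E ≃ᵢ E) (h : HasFracLapAt α C u L (φ x)) :
    HasFracLapAt α C (fun y => u (φ y)) L x := by
  refine Tendsto.congr (fun ε => ?_) h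
  rw [← (measurePreserving_isometryEquiv φ).setIntegral_preimage_emb
    φ.toHomeomorph.measurableEmbedding]
  simp only [fracKernel_isometryEquiv, preimage_ofPred_eq, φ.dist_eq]

lemma HasFracLapAt.reflectionDiff {L' : ℝ} (hα : 0 < α) (hu : Continuous u)
    (hM : ∀ y, |u y| ≤ M) (h' : HasFracLapAt α C u L' (planeReflection e l x))
    (h : HasFracLapAt α C u L x) : HasFracLapAt α C (reflectionDiff e l u) (L' - L) x :=
  HasFracLapAt.sub hα (hu.comp (planeReflection e l).continuous) hu (fun _ => hM _) hM
    (h'.comp_isometryEquiv _) h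

lemma tendsto_measureReal_ball_zero [Nontrivial E] (x : E) :
    Tendsto (fun ε => volume.real (ball x ε)) (𝓝[>] 0) (𝓝 0) := by
  have h := tendsto_measure_thickening_of_isClosed (μ := volume) (s := {x})
    ⟨1, one_pos, by simpa using measure_ball_lt_top.ne⟩ isClosed_singleton
  simp only [Metric.thickening_singleton, measure_singleton] at h
  exact (ENNReal.tendsto_toReal ENNReal.zero_ne_top).comp h

end FractionalLaplacian

section AntisymmetricMaximumPrinciple

variable {E : Type*} [NormedAddCommGroup E] [InnerProductSpace ℝ E] {e x y : E}
  {l α C L : ℝ} {U : E → ℝ}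

/-- `U` is a bounded continuous function, antisymmetric with respect to the hyperplane
`⟪e, ·⟫ = l`, whose minimum over the half-space `⟪e, ·⟫ ≤ l` is attained at the interior
point `x`. -/
structure IsAntisymmMinAt (e : E) (l : ℝ) (U : E → ℝ) (x : E) : Prop where
  continuous : Continuous U
  bounded : ∃ M, ∀ y, |U y| ≤ M
  antisymm : ∀ y, U (planeReflection e l y) = -U y
  inner_lt : ⟪e, x⟫ < l
  isMinOn : IsMinOn U {y | ⟪e, y⟫ ≤ l} x

/-- The integrand obtained by folding the integral that defines `-(-Δ)^{α/2} U x` onto the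
half-space `⟪e, ·⟫ ≤ l`, for `U` antisymmetric: the sum of its values at `y` and at the
reflection of `y`. -/
noncomputable def foldedIntegrand (α : ℝ) (e : E) (l : ℝ) (U : E → ℝ) (x y : E) : ℝ :=
  (U y - U x) * (fracKernel α x y - fracKernel α x (planeReflection e l y)) -
    2 * U x * fracKernel α x (planeReflection e l y)

/-- The integrand of the truncated integral in `HasFracLapAt`, extended by zero. -/
noncomputable def truncIntegrand (α ε : ℝ) (U : E → ℝ) (x : E) : E → ℝ :=
  {y | ε ≤ dist x y}.indicator fun y => (U x - U y) * fracKernel α x y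

lemma truncIntegrand_of_le {ε : ℝ} (h : ε ≤ dist x y) :
    truncIntegrand α ε U x y = (U x - U y) * fracKernel α x y :=
  indicator_of_mem (s := {y | ε ≤ dist x y}) h _

lemma truncIntegrand_of_lt {ε : ℝ} (h : dist x y < ε) : truncIntegrand α ε U x y = 0 :=
  indicator_of_notMem (s := {y | ε ≤ dist x y}) h.not_ge _

lemma continuousAt_foldedIntegrand (hU : Continuous U) (hxy : x ≠ y)
    (hxσ : x ≠ planeReflection e l y) : ContinuousAt (foldedIntegrand α e l U x) y := by
  have hK := continuousAt_fracKernel (α := α) hxy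
  have hKσ : ContinuousAt (fun z => fracKernel α x (planeReflection e l z)) y :=
    (continuousAt_fracKernel hxσ).comp (planeReflection e l).continuous.continuousAt
  unfold foldedIntegrand
  fun_prop

namespace IsAntisymmMinAt

lemma eq_zero_of_inner_eq (h : IsAntisymmMinAt e l U x) (he : ‖e‖ = 1) (hy : ⟪e, y⟫ = l) :
    U y = 0 := by
  have hanti := h.antisymm y
  rw [planeReflection_eq_self he hy] at hanti
  linarith

lemma nonpos (h : IsAntisymmMinAt e l U x) (he : ‖e‖ = 1) : U x ≤ 0 := by
  have hfoot : ⟪e, x + (l - ⟪e, x⟫) • e⟫ = l := by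
    simp [inner_add_right, inner_smul_right, he]
  exact (h.isMinOn hfoot.le).trans_eq (h.eq_zero_of_inner_eq he hfoot)

lemma neg_two_mul_le_foldedIntegrand (h : IsAntisymmMinAt e l U x) (he : ‖e‖ = 1) (hα : 0 < α)
    (hy : ⟪e, y⟫ ≤ l) :
    -2 * U x * fracKernel α x (planeReflection e l y) ≤ foldedIntegrand α e l U x y := by
  suffices 0 ≤ (U y - U x) *
      (fracKernel α x y - fracKernel α x (planeReflection e l y)) by
    unfold foldedIntegrand
    linarith
  rcases eq_or_ne x y with rfl | hxy
  · simp
  · exact mul_nonneg (sub_nonneg.2 (h.isMinOn hy)) (sub_nonneg.2 (fracKernel_le_inv_rpow hα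
      (dist_pos.2 hxy) (dist_le_dist_planeReflection he h.inner_lt.le hy)))

lemma foldedIntegrand_nonneg (h : IsAntisymmMinAt e l U x) (he : ‖e‖ = 1) (hα : 0 < α)
    (hy : ⟪e, y⟫ ≤ l) : 0 ≤ foldedIntegrand α e l U x y :=
  (mul_nonneg (by linarith [h.nonpos he]) (fracKernel_nonneg _ _ _)).trans
    (h.neg_two_mul_le_foldedIntegrand he hα hy)

lemma truncIntegrand_add_eq (h : IsAntisymmMinAt e l U x) (he : ‖e‖ = 1) {ε : ℝ}
    (hy : ⟪e, y⟫ ≤ l) (hε : ε ≤ dist x y) :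
    truncIntegrand α ε U x y + truncIntegrand α ε U x (planeReflection e l y) =
      -foldedIntegrand α e l U x y := by
  have hεσ := hε.trans (dist_le_dist_planeReflection he h.inner_lt.le hy)
  rw [truncIntegrand_of_le hε, truncIntegrand_of_le hεσ, h.antisymm, foldedIntegrand]
  ring

lemma truncIntegrand_add_le (h : IsAntisymmMinAt e l U x) (he : ‖e‖ = 1) (hα : 0 < α) {ε M : ℝ}
    (hM : ∀ y, |U y| ≤ M) (hy : ⟪e, y⟫ ≤ l) (hε : dist x y < ε) :
    truncIntegrand α ε U x y + truncIntegrand α ε U x (planeReflection e l y) ≤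
      2 * M * ((l - ⟪e, x⟫) ^ ((finrank ℝ E : ℝ) + α))⁻¹ := by
  have hM0 : 0 ≤ M := (abs_nonneg _).trans (hM x)
  have hgap := sub_pos.2 h.inner_lt
  rw [truncIntegrand_of_lt hε, zero_add]
  rcases lt_or_ge (dist x (planeReflection e l y)) ε with hεσ | hεσ
  · rw [truncIntegrand_of_lt hεσ]
    positivity
  · rw [truncIntegrand_of_le hεσ]
    refine mul_le_mul ?_ (fracKernel_le_inv_rpow hα hgap (sub_inner_le_dist_planeReflection he hy))
      (fracKernel_nonneg _ _ _) (by positivity)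
    linarith [(abs_le.1 (hM x)).2, (abs_le.1 (hM (planeReflection e l y))).1]

variable [MeasurableSpace E] [BorelSpace E] [FiniteDimensional ℝ E]

lemma setIntegral_le_sub (h : IsAntisymmMinAt e l U x) (he : ‖e‖ = 1) (hα : 0 < α) {M : ℝ}
    (hM : ∀ y, |U y| ≤ M) {B : Set E} (hB : MeasurableSet B) (hB_fin : volume B ≠ ⊤)
    (hBl : ∀ y ∈ B, ⟪e, y⟫ < l) {c : ℝ} (hc : 0 ≤ c)
    (hcB : ∀ y ∈ B, c ≤ foldedIntegrand α e l U x y) {ε : ℝ} (hε : 0 < ε) (hεl : ε ≤ l - ⟪e, x⟫) :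
    ∫ y in {y | ε ≤ dist x y}, (U x - U y) * fracKernel α x y ≤
      (2 * M * ((l - ⟪e, x⟫) ^ ((finrank ℝ E : ℝ) + α))⁻¹ + c) * volume.real (ball x ε) -
        c * volume.real B := by
  set N := 2 * M * ((l - ⟪e, x⟫) ^ ((finrank ℝ E : ℝ) + α))⁻¹
  have hS : MeasurableSet {y | ε ≤ dist x y} := measurableSet_le measurable_const (by fun_prop)
  have hball : Integrable ((ball x ε).indicator fun _ => N + c) :=
    (integrableOn_const measure_ball_lt_top.ne).integrable_indicator measurableSet_ball
  have hBint : Integrable (B.indicator fun _ => c) :=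
    (integrableOn_const hB_fin).integrable_indicator hB
  have hrhs : ∫ y, ((ball x ε).indicator (fun _ => N + c) y - B.indicator (fun _ => c) y) =
      (N + c) * volume.real (ball x ε) - c * volume.real B := by
    rw [integral_sub hball hBint, integral_indicator_const _ measurableSet_ball,
      integral_indicator_const _ hB, smul_eq_mul, smul_eq_mul, mul_comm, mul_comm c]
  rw [← hrhs, ← integral_indicator hS]
  refine integral_le_of_add_comp_planeReflection_le (l := l) he
    ((integrableOn_sub_mul_fracKernel hα h.continuous hM x hε).integrable_indicator hS)
    (hball.sub hBint) (fun y hy => ?_) (fun y hy => ?_)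
  · have hy_ball : y ∉ ball x ε := fun hmem =>
      (inner_lt_of_mem_ball he (Metric.ball_subset_ball hεl hmem)).not_ge hy
    have hy_B : y ∉ B := fun hmem => (hBl y hmem).not_ge hy
    rw [indicator_of_notMem hy_ball, indicator_of_notMem hy_B, sub_zero]
  change truncIntegrand α ε U x y + truncIntegrand α ε U x (planeReflection e l y) ≤ _
  rcases lt_or_ge (dist x y) ε with hy_near | hy_far
  · have hcle : B.indicator (fun _ => c) y ≤ c := indicator_le_self' (fun _ _ => hc) y
    rw [indicator_of_mem (Metric.mem_ball'.2 hy_near)]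
    linarith [h.truncIntegrand_add_le he hα hM hy hy_near]
  · have hcle : B.indicator (fun _ => c) y ≤ foldedIntegrand α e l U x y :=
      indicator_apply_le' (hcB y) fun _ => h.foldedIntegrand_nonneg he hα hy
    rw [indicator_of_notMem fun hmem => (Metric.mem_ball'.1 hmem).not_ge hy_far,
      h.truncIntegrand_add_eq he hy hy_far]
    linarith

lemma le_neg_of_le_foldedIntegrand (h : IsAntisymmMinAt e l U x) (he : ‖e‖ = 1) (hα : 0 < α)
    (hC : 0 ≤ C) (hL : HasFracLapAt α C U L x) {B : Set E} (hB : MeasurableSet B)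
    (hB_fin : volume B ≠ ⊤) (hBl : ∀ y ∈ B, ⟪e, y⟫ < l) {c : ℝ} (hc : 0 ≤ c)
    (hcB : ∀ y ∈ B, c ≤ foldedIntegrand α e l U x y) : L ≤ -(C * (c * volume.real B)) := by
  obtain ⟨M, hM⟩ := h.bounded
  set N := 2 * M * ((l - ⟪e, x⟫) ^ ((finrank ℝ E : ℝ) + α))⁻¹
  have hlim : Tendsto (fun ε => C * ((N + c) * volume.real (ball x ε) - c * volume.real B))
      (𝓝[>] 0) (𝓝 (-(C * (c * volume.real B)))) := by
    have : Nontrivial E := ⟨e, 0, norm_ne_zero_iff.1 (he ▸ one_ne_zero)⟩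
    have hvol := tendsto_measureReal_ball_zero x
    simpa using ((hvol.const_mul (N + c)).sub_const (c * volume.real B)).const_mul C
  refine le_of_tendsto_of_tendsto hL hlim ?_
  filter_upwards [Ioc_mem_nhdsGT (sub_pos.2 h.inner_lt)] with ε hε
  gcongr
  exact h.setIntegral_le_sub he hα hM hB hB_fin hBl hc hcB hε.1 hε.2

end IsAntisymmMinAt

/-- The constant in the quantitative form of the antisymmetric maximum principle. -/
noncomputable def maxPrincipleConst (E : Type*) [NormedAddCommGroup E] [InnerProductSpace ℝ E]
    [MeasurableSpace E] [BorelSpace E] [FiniteDimensional ℝ E] (α C : ℝ) : ℝ :=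
  2 * C * volume.real (ball (0 : E) 1) * (3 ^ ((finrank ℝ E : ℝ) + α))⁻¹

lemma maxPrincipleConst_pos [MeasurableSpace E] [BorelSpace E] [FiniteDimensional ℝ E]
    (α : ℝ) (hC : 0 < C) : 0 < maxPrincipleConst E α C := by
  have : 0 < volume.real (ball (0 : E) 1) :=
    ENNReal.toReal_pos (Metric.measure_ball_pos volume 0 one_pos).ne' measure_ball_lt_top.ne
  unfold maxPrincipleConst
  positivity

namespace IsAntisymmMinAt

variable [MeasurableSpace E] [BorelSpace E] [FiniteDimensional ℝ E]

theorem fracLap_le (h : IsAntisymmMinAt e l U x) (he : ‖e‖ = 1) (hα : 0 < α) (hC : 0 ≤ C)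
    (hL : HasFracLapAt α C U L x) :
    L ≤ maxPrincipleConst E α C * (l - ⟪e, x⟫) ^ (-α) * U x := by
  set δ := l - ⟪e, x⟫
  have hδ : 0 < δ := sub_pos.2 h.inner_lt
  have hUx := h.nonpos he
  have hfolded : ∀ y ∈ ball x δ,
      -2 * U x * ((3 * δ) ^ ((finrank ℝ E : ℝ) + α))⁻¹ ≤ foldedIntegrand α e l U x y := by
    intro y hy
    have hyl := inner_lt_of_mem_ball he hy
    have hgap := sub_inner_le_dist_planeReflection he (x := x) hyl.le
    have hdist : dist x (planeReflection e l y) ≤ 3 * δ := by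
      have htri := dist_triangle x (planeReflection e l x) (planeReflection e l y)
      rw [dist_planeReflection_self he h.inner_lt.le, (planeReflection e l).dist_eq] at htri
      linarith [Metric.mem_ball'.1 hy]
    refine le_trans ?_ (h.neg_two_mul_le_foldedIntegrand he hα hyl.le)
    gcongr
    · linarith
    · exact inv_rpow_le_fracKernel hα (dist_pos.1 (hδ.trans_le hgap)) hdist
  have hL_le := h.le_neg_of_le_foldedIntegrand he hα hC hL measurableSet_ball
    measure_ball_lt_top.ne (fun y => inner_lt_of_mem_ball he)
    (mul_nonneg (by linarith) (by positivity)) hfolded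
  have hvol : volume.real (ball x δ) = δ ^ (finrank ℝ E : ℝ) * volume.real (ball (0 : E) 1) := by
    rw [measureReal_def, Measure.addHaar_ball_of_pos volume x hδ, ENNReal.toReal_mul,
      ENNReal.toReal_ofReal (by positivity), Real.rpow_natCast, measureReal_def]
  refine hL_le.trans_eq ?_
  rw [hvol, maxPrincipleConst, Real.mul_rpow three_pos.le hδ.le, Real.rpow_add hδ,
    Real.rpow_neg hδ.le]
  field_simp

theorem eq_zero (h : IsAntisymmMinAt e l U x) (he : ‖e‖ = 1) (hα : 0 < α) (hC : 0 < C)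
    (hUx : U x = 0) (hL : HasFracLapAt α C U L x) (hL0 : 0 ≤ L) : U = 0 := by
  have hlt : ∀ y, ⟪e, y⟫ < l → U y = 0 := by
    intro y hy
    by_contra hUy
    have hUy_pos : 0 < U y := (hUx ▸ h.isMinOn hy.le).lt_of_ne' hUy
    have hxy : x ≠ y := fun hxy => hUy (hxy ▸ hUx)
    have hK := fracKernel_lt_fracKernel hα hxy (dist_lt_dist_planeReflection he h.inner_lt hy)
    have hpos : 0 < foldedIntegrand α e l U x y := by
      simpa [foldedIntegrand, hUx] using mul_pos hUy_pos (sub_pos.2 hK)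
    have hxσ : x ≠ planeReflection e l y := by
      rintro rfl
      linarith [h.inner_lt, inner_planeReflection he l y]
    have hcont := continuousAt_foldedIntegrand (α := α) h.continuous hxy hxσ
    obtain ⟨ρ, hρ, hball⟩ := Metric.eventually_nhds_iff_ball.1
      ((hcont.eventually (lt_mem_nhds (half_lt_self hpos))).and
        ((isOpen_lt (by fun_prop : Continuous fun z => ⟪e, z⟫) continuous_const).mem_nhds hy))
    have hneg := h.le_neg_of_le_foldedIntegrand he hα hC.le hL measurableSet_ball
      measure_ball_lt_top.ne (fun z hz => (hball z hz).2) (half_pos hpos).le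
      (fun z hz => (hball z hz).1.le)
    have hvol : 0 < volume.real (ball y ρ) :=
      ENNReal.toReal_pos (Metric.measure_ball_pos volume y hρ).ne' measure_ball_lt_top.ne
    linarith [mul_pos hC (mul_pos (half_pos hpos) hvol)]
  ext y
  rcases lt_trichotomy ⟪e, y⟫ l with hy | hy | hy
  · exact hlt y hy
  · exact h.eq_zero_of_inner_eq he hy
  · have := hlt (planeReflection e l y) (by rw [inner_planeReflection he]; linarith)
    simpa [h.antisymm] using this

end IsAntisymmMinAt

end AntisymmetricMaximumPrinciple

lemma exists_and_not_eventually_of_bddAbove {P : ℝ → Prop} (h_start : ∃ l, ∀ m ≤ l, P m)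
    (h_bdd : BddAbove {l | P l}) (h_closed : ∀ l, (∀ m < l, P m) → P l) :
    ∃ l, P l ∧ ¬∀ᶠ m in 𝓝 l, P m := by
  set S : Set ℝ := {l | ∀ m ≤ l, P m}
  have hS : BddAbove S := h_bdd.mono fun l hl => hl l le_rfl
  have hlt : ∀ m < sSup S, P m := fun m hm =>
    let ⟨_, hl, hml⟩ := exists_lt_of_lt_csSup h_start hm
    hl m hml.le
  refine ⟨sSup S, h_closed _ hlt, fun hev => ?_⟩
  obtain ⟨ε, hε, hball⟩ := Metric.eventually_nhds_iff_ball.1 hev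
  have hmem : sSup S + ε / 2 ∈ S := by
    intro m hm
    rcases lt_or_ge m (sSup S) with hm' | hm'
    · exact hlt m hm'
    · exact hball m (by rw [Metric.mem_ball, Real.dist_eq, abs_of_nonneg (by linarith)]; linarith)
  linarith [le_csSup hS hmem]

lemma exists_forall_abs_le_of_tendsto_cocompact {X : Type*} [TopologicalSpace X] {u : X → ℝ}
    (hu : Continuous u) (hlim : Tendsto u (cocompact X) (𝓝 0)) : ∃ M, ∀ x, |u x| ≤ M := by
  obtain ⟨M, hM⟩ :=
    (ZeroAtInftyContinuousMap.isBounded_range ⟨⟨u, hu⟩, hlim⟩).exists_norm_le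
  exact ⟨M, fun x => hM (u x) (mem_range_self x)⟩

lemma exists_isMinOn_of_tendsto_cocompact {X : Type*} [TopologicalSpace X] {w : X → ℝ}
    (hw : Continuous w) (hlim : Tendsto w (cocompact X) (𝓝 0)) {S : Set X} (hS : IsClosed S)
    {x₁ : X} (hx₁ : x₁ ∈ S) (hneg : w x₁ < 0) : ∃ x ∈ S, IsMinOn w S x ∧ w x < 0 := by
  obtain ⟨x, hxS, hmin⟩ := hw.continuousOn.exists_isMinOn' hS hx₁
    (((hlim.eventually (lt_mem_nhds hneg)).filter_mono inf_le_left).mono fun _ hy => hy.le)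
  exact ⟨x, hxS, hmin, (hmin hx₁).trans_lt hneg⟩

section LeReflection

variable {E : Type*} [NormedAddCommGroup E] [InnerProductSpace ℝ E] {e x : E} {l : ℝ} {u : E → ℝ}

/-- On the half-space `⟪e, ·⟫ ≤ l` the function `u` is bounded by its reflection: the property
that is propagated by moving the plane. -/
def LeReflection (e : E) (l : ℝ) (u : E → ℝ) : Prop :=
  ∀ x, ⟪e, x⟫ ≤ l → u x ≤ u (planeReflection e l x)

lemma leReflection_of_forall_lt (he : ‖e‖ = 1) (hu : Continuous u)
    (h : ∀ m < l, LeReflection e m u) : LeReflection e l u := by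
  intro x hx
  rcases hx.lt_or_eq with hx | hx
  · have hlim : Tendsto (fun m => u (planeReflection e m x)) (𝓝[<] l)
        (𝓝 (u (planeReflection e l x))) :=
      ((hu.comp (continuous_planeReflection_uncurry.comp
        (.prodMk_left x))).tendsto l).mono_left inf_le_left
    refine ge_of_tendsto hlim ?_
    filter_upwards [Ioo_mem_nhdsLT hx] with m hm
    exact h m hm.2 x hm.1.le
  · rw [planeReflection_eq_self he hx]

lemma bddAbove_setOf_leReflection [ProperSpace E] (he : ‖e‖ = 1) (hu0 : 0 < u 0)
    (hlim : Tendsto u (cocompact E) (𝓝 0)) : BddAbove {l | LeReflection e l u} := by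
  have hσ : Tendsto (fun l => planeReflection e l 0) atTop (cocompact E) := by
    rw [← Metric.cobounded_eq_cocompact, ← tendsto_norm_atTop_iff_cobounded]
    simp only [planeReflection_apply he, inner_zero_right, norm_smul, he, zero_add]
    simpa using tendsto_abs_atTop_atTop.const_mul_atTop two_pos
  obtain ⟨b, hb⟩ := eventually_atTop.1
    ((hlim.comp hσ).eventually (gt_mem_nhds hu0) |>.and (eventually_ge_atTop 0))
  refine ⟨b, fun l hl => le_of_not_gt fun hbl => ?_⟩
  obtain ⟨hlt, hl0⟩ := hb l hbl.le
  exact (hl 0 (by simpa using hl0)).not_gt hlt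

lemma eventually_forall_mem_lt_planeReflection (hu : Continuous u) {S : Set E}
    (hS : IsCompact S) (h : ∀ x ∈ S, u x < u (planeReflection e l x)) :
    ∀ᶠ m in 𝓝 l, ∀ x ∈ S, u x < u (planeReflection e m x) :=
  hS.eventually_forall_of_forall_eventually fun x hx =>
    ((hu.comp continuous_snd).continuousAt.eventually_lt
      (hu.comp continuous_planeReflection_uncurry).continuousAt (h x hx))

end LeReflection

section DropBound

variable {X : Type*} {f : ℝ → ℝ → ℝ} {u v : X → ℝ} {K K' : ℝ} {x y : X}

/-- One-sided Lipschitz bound for the nonlinearity `f` along a drop of `u` from `x` to `y` that is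
at least as large as the drop of `v`. Only such pairs occur at a negative minimum of
`min (u ∘ σ - u) (v ∘ σ - v)`, which is where `f` gets compared. -/
def DropBound (f : ℝ → ℝ → ℝ) (u v : X → ℝ) (K : ℝ) (x y : X) : Prop :=
  u y < u x → u y - u x ≤ v y - v x → K * (u y - u x) ≤ f (u y) (v y) - f (u x) (v x)

lemma DropBound.mono (h : DropBound f u v K x y) (hK : K ≤ K') : DropBound f u v K' x y :=
  fun hu huv => (mul_le_mul_of_nonpos_right hK (sub_neg.2 hu).le).trans (h hu huv)

lemma dropBound_of_le (h : u x ≤ u y) : DropBound f u v K x y :=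
  fun hu => absurd hu h.not_gt

end DropBound

section MovingPlanes

variable {E : Type*} [NormedAddCommGroup E] [InnerProductSpace ℝ E] [FiniteDimensional ℝ E]
  [MeasurableSpace E] [BorelSpace E] {α C κ l : ℝ} {f g : ℝ → ℝ → ℝ} {u v : E → ℝ} {e x : E}

/-- A positive solution `u` of the equation `(-Δ)^{α/2} u = f(u, v)` that vanishes at infinity,
with the properties of `f` along `(u, v)` needed to move planes. The system of the theorem is
a pair of these structures, the second one with `u` and `v` swapped. -/
structure CoupledSolution (α C : ℝ) (f : ℝ → ℝ → ℝ) (u v : E → ℝ) : Prop where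
  continuous : Continuous u
  pos : ∀ x, 0 < u x
  tendsto_zero : Tendsto u (cocompact E) (𝓝 0)
  hasFracLapAt : ∀ x, HasFracLapAt α C u (f (u x) (v x)) x
  strictMonoOn : ∀ w, 0 < w → StrictMonoOn (f w) (Ioi 0)
  exists_dropBound : ∃ K, ∀ x y, DropBound f u v K x y
  eventually_dropBound :
    ∀ κ, 0 < κ → ∀ᶠ x in cocompact E, ∀ y, DropBound f u v (κ * ‖x‖ ^ (-α)) x y

namespace CoupledSolution

lemma hasFracLapAt_reflectionDiff (h : CoupledSolution α C f u v) (hα : 0 < α) (e : E) (l : ℝ)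
    (x : E) : HasFracLapAt α C (reflectionDiff e l u)
      (f (u (planeReflection e l x)) (v (planeReflection e l x)) - f (u x) (v x)) x :=
  have ⟨_, hM⟩ := exists_forall_abs_le_of_tendsto_cocompact h.continuous h.tendsto_zero
  (h.hasFracLapAt _).reflectionDiff hα h.continuous hM (h.hasFracLapAt x)

lemma isAntisymmMinAt (h : CoupledSolution α C f u v) (he : ‖e‖ = 1) (hx : ⟪e, x⟫ < l)
    (hmin : IsMinOn (reflectionDiff e l u) {y | ⟪e, y⟫ ≤ l} x) :
    IsAntisymmMinAt e l (reflectionDiff e l u) x where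
  continuous := continuous_reflectionDiff h.continuous l
  bounded := exists_forall_abs_le_of_tendsto_cocompact (continuous_reflectionDiff h.continuous l)
    (tendsto_reflectionDiff_cocompact h.tendsto_zero l)
  antisymm := reflectionDiff_planeReflection he l u
  inner_lt := hx
  isMinOn := hmin

lemma reflectionDiff_nonneg_of_isMinOn (h : CoupledSolution α C f u v) (hα : 0 < α) (hC : 0 < C)
    (he : ‖e‖ = 1) (hκ : κ < maxPrincipleConst E α C) (hx : ⟪e, x⟫ < l)
    (hf : DropBound f u v (κ * (l - ⟪e, x⟫) ^ (-α)) x (planeReflection e l x))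
    (hmin : IsMinOn (reflectionDiff e l u) {y | ⟪e, y⟫ ≤ l} x)
    (huv : reflectionDiff e l u x ≤ reflectionDiff e l v x) : 0 ≤ reflectionDiff e l u x := by
  by_contra! hneg
  have hlower := hf (sub_neg.1 hneg) huv
  have hupper := (h.isAntisymmMinAt he hx hmin).fracLap_le he hα hC.le
    (h.hasFracLapAt_reflectionDiff hα e l x)
  have hδ : 0 < (l - ⟪e, x⟫) ^ (-α) := Real.rpow_pos_of_pos (sub_pos.2 hx) _
  exact ((mul_lt_mul_of_neg_right (mul_lt_mul_of_pos_right hκ hδ) hneg).trans_le hlower).not_ge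
    hupper

lemma leReflection_of_dropBound (h : CoupledSolution α C f u v) (h' : CoupledSolution α C g v u)
    (hα : 0 < α) (hC : 0 < C) (he : ‖e‖ = 1) (hκ : κ < maxPrincipleConst E α C)
    (hf : ∀ x, ⟪e, x⟫ < l →
      DropBound f u v (κ * (l - ⟪e, x⟫) ^ (-α)) x (planeReflection e l x))
    (hg : ∀ x, ⟪e, x⟫ < l →
      DropBound g v u (κ * (l - ⟪e, x⟫) ^ (-α)) x (planeReflection e l x)) :
    LeReflection e l u ∧ LeReflection e l v := by
  set U := reflectionDiff e l u
  set V := reflectionDiff e l v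
  suffices h_nonneg : ∀ x, ⟪e, x⟫ ≤ l → 0 ≤ min (U x) (V x) from
    ⟨fun x hx => sub_nonneg.1 (le_min_iff.1 (h_nonneg x hx)).1,
      fun x hx => sub_nonneg.1 (le_min_iff.1 (h_nonneg x hx)).2⟩
  by_contra! ⟨x₁, hx₁, hneg⟩
  have hcont : Continuous fun x => min (U x) (V x) :=
    (continuous_reflectionDiff h.continuous l).min (continuous_reflectionDiff h'.continuous l)
  have hlim : Tendsto (fun x => min (U x) (V x)) (cocompact E) (𝓝 0) := by
    simpa only [min_self] using (tendsto_reflectionDiff_cocompact h.tendsto_zero l).min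
      (tendsto_reflectionDiff_cocompact h'.tendsto_zero l)
  obtain ⟨x, hxl, hmin, hx_neg⟩ := exists_isMinOn_of_tendsto_cocompact hcont hlim
    (isClosed_le (by fun_prop : Continuous fun y => ⟪e, y⟫) continuous_const) hx₁ hneg
  have hx : ⟪e, x⟫ < l := by
    refine lt_of_le_of_ne hxl fun hx => hx_neg.ne ?_
    simp [U, V, reflectionDiff, planeReflection_eq_self he hx]
  rcases le_total (U x) (V x) with huv | hvu
  · rw [min_eq_left huv] at hx_neg
    refine hx_neg.not_ge (h.reflectionDiff_nonneg_of_isMinOn hα hC he hκ hx (hf x hx) ?_ huv)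
    exact fun y hy => (min_eq_left huv).symm.trans_le ((hmin hy).trans (min_le_left _ _))
  · rw [min_eq_right hvu] at hx_neg
    refine hx_neg.not_ge (h'.reflectionDiff_nonneg_of_isMinOn hα hC he hκ hx (hg x hx) ?_ hvu)
    exact fun y hy => (min_eq_right hvu).symm.trans_le ((hmin hy).trans (min_le_right _ _))

lemma comp_planeReflection_eq_of_eq (h : CoupledSolution α C f u v)
    (h' : CoupledSolution α C g v u) (hα : 0 < α) (hC : 0 < C) (he : ‖e‖ = 1)
    (hu : LeReflection e l u) (hv : LeReflection e l v) (hx : ⟪e, x⟫ < l)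
    (hux : u (planeReflection e l x) = u x) :
    (∀ y, u (planeReflection e l y) = u y) ∧ ∀ y, v (planeReflection e l y) = v y := by
  have hUx : reflectionDiff e l u x = 0 := sub_eq_zero.2 hux
  have hmin : IsMinOn (reflectionDiff e l u) {y | ⟪e, y⟫ ≤ l} x :=
    fun y hy => hUx.trans_le (sub_nonneg.2 (hu y hy))
  have hL0 : 0 ≤ f (u (planeReflection e l x)) (v (planeReflection e l x)) - f (u x) (v x) := by
    rw [hux, sub_nonneg]
    exact (h.strictMonoOn _ (h.pos x)).monotoneOn (h'.pos x) (h'.pos _) (hv x hx.le)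
  have hU : reflectionDiff e l u = 0 := (h.isAntisymmMinAt he hx hmin).eq_zero he hα hC hUx
    (h.hasFracLapAt_reflectionDiff hα e l x) hL0
  have hu_symm : ∀ y, u (planeReflection e l y) = u y := fun y => sub_eq_zero.1 (congrFun hU y)
  refine ⟨hu_symm, fun y => (h.strictMonoOn _ (h.pos y)).injOn (h'.pos _) (h'.pos y) ?_⟩
  -- The fractional Laplacian of `u ∘ σ - u = 0` vanishes, so `f (u, v)` is symmetric as well.
  have hzero := h.hasFracLapAt_reflectionDiff hα e l y
  simp only [hU, HasFracLapAt, Pi.zero_apply, sub_self, zero_mul, integral_zero, mul_zero,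
    hu_symm] at hzero
  exact (sub_eq_zero.1 (tendsto_nhds_unique tendsto_const_nhds hzero).symm)

lemma strict_or_comp_planeReflection_eq (h : CoupledSolution α C f u v)
    (h' : CoupledSolution α C g v u) (hα : 0 < α) (hC : 0 < C) (he : ‖e‖ = 1)
    (hu : LeReflection e l u) (hv : LeReflection e l v) :
    (∀ x, ⟪e, x⟫ < l → u x < u (planeReflection e l x) ∧ v x < v (planeReflection e l x)) ∨
      (∀ y, u (planeReflection e l y) = u y) ∧ ∀ y, v (planeReflection e l y) = v y := by
  by_contra! ⟨⟨x, hx, h_not_strict⟩, h_not_symm⟩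
  have hux : u x < u (planeReflection e l x) := (hu x hx.le).lt_of_ne fun hux =>
    let ⟨hu_symm, hv_symm⟩ := h.comp_planeReflection_eq_of_eq h' hα hC he hu hv hx hux.symm
    let ⟨y, hy⟩ := h_not_symm hu_symm
    hy (hv_symm y)
  obtain ⟨hv_symm, hu_symm⟩ := h'.comp_planeReflection_eq_of_eq h hα hC he hv hu hx
    ((h_not_strict hux).antisymm (hv x hx.le))
  obtain ⟨y, hy⟩ := h_not_symm hu_symm
  exact hy (hv_symm y)

lemma eventually_dropBound_of_le (h : CoupledSolution α C f u v) (hα : 0 < α) (he : ‖e‖ = 1)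
    (hκ : 0 < κ) (b : ℝ) : ∀ᶠ x in cocompact E, ∀ l ≤ b, ⟪e, x⟫ < l →
      ∀ y, DropBound f u v (κ * (l - ⟪e, x⟫) ^ (-α)) x y := by
  filter_upwards [h.eventually_dropBound (κ * 2 ^ (-α)) (by positivity),
    tendsto_norm_cocompact_atTop.eventually_ge_atTop b] with x hdrop hbx l hl hx y
  have hδ : 0 < l - ⟪e, x⟫ := sub_pos.2 hx
  have hle : l - ⟪e, x⟫ ≤ 2 * ‖x‖ := by
    have := (abs_le.1 (abs_real_inner_le_norm e x)).1
    rw [he] at this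
    linarith
  refine (hdrop y).mono ?_
  rw [mul_assoc, ← Real.mul_rpow two_pos.le (norm_nonneg x)]
  exact mul_le_mul_of_nonneg_left
    (Real.rpow_le_rpow_of_nonpos hδ hle (neg_nonpos.2 hα.le)) hκ.le

lemma exists_forall_dropBound_of_le (h : CoupledSolution α C f u v) (hα : 0 < α) (hκ : 0 < κ) :
    ∃ η > 0, ∀ d, 0 < d → d ≤ η → ∀ x y, DropBound f u v (κ * d ^ (-α)) x y := by
  obtain ⟨K, hK⟩ := h.exists_dropBound
  have hlim : Tendsto (fun d : ℝ => κ * d ^ (-α)) (𝓝[>] 0) atTop :=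
    (tendsto_rpow_neg_nhdsGT_zero (neg_neg_of_pos hα)).const_mul_atTop hκ
  obtain ⟨η, hη, hη_le⟩ := mem_nhdsGT_iff_exists_Ioc_subset.1 (hlim.eventually_ge_atTop K)
  exact ⟨η, hη, fun d hd hdη x y => (hK x y).mono (hη_le ⟨hd, hdη⟩)⟩

lemma eventually_atBot_dropBound (h : CoupledSolution α C f u v) (hα : 0 < α) (he : ‖e‖ = 1)
    (hκ : 0 < κ) : ∀ᶠ l in atBot, ∀ x, ⟪e, x⟫ < l →
      DropBound f u v (κ * (l - ⟪e, x⟫) ^ (-α)) x (planeReflection e l x) := by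
  obtain ⟨S, hS, hfar⟩ := mem_cocompact.1 (h.eventually_dropBound_of_le hα he hκ 0)
  obtain ⟨R, hR⟩ := hS.isBounded.exists_norm_le
  filter_upwards [eventually_le_atBot 0, eventually_le_atBot (-R)] with l hl0 hlR x hx
  have hxS : x ∉ S := fun hmem => by
    have := (abs_le.1 (abs_real_inner_le_norm e x)).1
    rw [he] at this
    linarith [hR x hmem]
  exact hfar hxS l hl0 hx _

lemma eventually_nhds_dropBound (h : CoupledSolution α C f u v) (hα : 0 < α) (he : ‖e‖ = 1)
    (hκ : 0 < κ) (h_strict : ∀ x, ⟪e, x⟫ < l → u x < u (planeReflection e l x)) :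
    ∀ᶠ m in 𝓝 l, ∀ x, ⟪e, x⟫ < m →
      DropBound f u v (κ * (m - ⟪e, x⟫) ^ (-α)) x (planeReflection e m x) := by
  obtain ⟨S, hS, hfar⟩ := mem_cocompact.1 (h.eventually_dropBound_of_le hα he hκ (l + 1))
  obtain ⟨η, hη, hnear⟩ := h.exists_forall_dropBound_of_le hα hκ
  have hT : IsCompact (S ∩ {x | ⟪e, x⟫ ≤ l - η / 2}) :=
    hS.inter_right (isClosed_le (by fun_prop) continuous_const)
  have hT_strict : ∀ x ∈ S ∩ {x | ⟪e, x⟫ ≤ l - η / 2}, u x < u (planeReflection e l x) :=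
    fun x hx => h_strict x (hx.2.trans_lt (by linarith))
  filter_upwards [gt_mem_nhds (lt_add_one l), gt_mem_nhds (lt_add_of_pos_right l (half_pos hη)),
    eventually_forall_mem_lt_planeReflection h.continuous hT hT_strict] with m hm1 hmη hmT x hx
  by_cases hxS : x ∈ S
  · rcases le_or_gt (m - ⟪e, x⟫) η with hx_near | hx_mid
    · exact hnear _ (sub_pos.2 hx) hx_near _ _
    · exact dropBound_of_le (hmT x ⟨hxS, by rw [mem_ofPred_eq]; linarith⟩).le
  · exact hfar hxS m hm1.le hx _

theorem exists_comp_planeReflection_eq (h : CoupledSolution α C f u v)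
    (h' : CoupledSolution α C g v u) (hα : 0 < α) (hC : 0 < C) (he : ‖e‖ = 1) :
    ∃ l, (∀ x, u (planeReflection e l x) = u x) ∧ ∀ x, v (planeReflection e l x) = v x := by
  have hc := maxPrincipleConst_pos (E := E) α hC
  have h_start : ∃ l, ∀ m ≤ l, LeReflection e m u ∧ LeReflection e m v := by
    refine eventually_atBot.1 ?_
    filter_upwards [h.eventually_atBot_dropBound hα he (half_pos hc),
      h'.eventually_atBot_dropBound hα he (half_pos hc)] with l hu hv
    exact h.leReflection_of_dropBound h' hα hC he (half_lt_self hc) hu hv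
  obtain ⟨l, ⟨hu, hv⟩, h_max⟩ := exists_and_not_eventually_of_bddAbove h_start
    ((bddAbove_setOf_leReflection he (h.pos 0) h.tendsto_zero).mono fun l hl => hl.1)
    fun l hl => ⟨leReflection_of_forall_lt he h.continuous fun m hm => (hl m hm).1,
      leReflection_of_forall_lt he h'.continuous fun m hm => (hl m hm).2⟩
  refine ⟨l, (h.strict_or_comp_planeReflection_eq h' hα hC he hu hv).resolve_left
    fun h_strict => h_max ?_⟩
  filter_upwards [h.eventually_nhds_dropBound hα he (half_pos hc) fun x hx => (h_strict x hx).1,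
    h'.eventually_nhds_dropBound hα he (half_pos hc) fun x hx => (h_strict x hx).2] with m hu hv
  exact h.leReflection_of_dropBound h' hα hC he (half_lt_self hc) hu hv

theorem exists_radial (h : CoupledSolution α C f u v) (h' : CoupledSolution α C g v u)
    (hα : 0 < α) (hC : 0 < C) :
    ∃ x₀, ∀ x y, ‖x - x₀‖ = ‖y - x₀‖ → u x = u y ∧ v x = v y := by
  obtain ⟨x₀, hx₀⟩ := exists_mem_forall_symmetry_plane h.continuous (h.pos 0) h.tendsto_zero
  refine ⟨x₀, fun x y hxy => ?_⟩
  rcases eq_or_ne x y with rfl | hne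
  · exact ⟨rfl, rfl⟩
  obtain ⟨e, he, hσ⟩ := exists_planeReflection_eq hne hxy
  obtain ⟨l, hu, hv⟩ := h.exists_comp_planeReflection_eq h' hα hC he
  rw [hx₀ e l he hu] at hσ
  exact ⟨hσ ▸ (hu x).symm, hσ ▸ (hv x).symm⟩

end CoupledSolution

end MovingPlanes

section Nonlinearity

/-- The one-sided asymptotic bound `φ(w, z) ≲ w ^ p * z ^ q` as `(w, z) → (0⁺, 0⁺)`. -/
def PowerBoundNearZero (φ : ℝ → ℝ → ℝ) (p q : ℝ) : Prop :=
  ∃ A, ∃ δ > 0, ∀ w ∈ Ioo 0 δ, ∀ z ∈ Ioo 0 δ, φ w z ≤ A * (w ^ p * z ^ q)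

lemma isLittleO_rpow_rpow_atTop {a b : ℝ} (h : a < b) :
    (fun x : ℝ => x ^ a) =o[atTop] fun x => x ^ b := by
  refine (Asymptotics.isLittleO_iff_tendsto' ?_).2 ?_
  · filter_upwards [eventually_gt_atTop 0] with x hx h0
    exact absurd h0 (Real.rpow_pos_of_pos hx b).ne'
  · refine (tendsto_rpow_neg_atTop (sub_pos.2 h)).congr' ?_
    filter_upwards [eventually_gt_atTop 0] with x hx
    rw [neg_sub, Real.rpow_sub hx]

lemma tendsto_zero_of_isBigO_norm_rpow_neg {E : Type*} [NormedAddCommGroup E] [ProperSpace E]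
    {u : E → ℝ} {a : ℝ} (ha : 0 < a) (hu : u =O[cocompact E] fun x => ‖x‖ ^ (-a)) :
    Tendsto u (cocompact E) (𝓝 0) :=
  hu.trans_tendsto ((tendsto_rpow_neg_atTop ha).comp tendsto_norm_cocompact_atTop)

lemma isBigO_cocompact_of_le {E : Type*} [NormedAddCommGroup E] [ProperSpace E] {u v : E → ℝ}
    (hu : ∀ x, 0 < u x) (h : ∃ R, ∀ x, R < ‖x‖ → u x ≤ v x) : u =O[cocompact E] v := by
  obtain ⟨R, hR⟩ := h
  refine .of_bound 1 ?_
  filter_upwards [tendsto_norm_cocompact_atTop.eventually_gt_atTop R] with x hx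
  rw [one_mul, Real.norm_of_nonneg (hu x).le]
  exact (hR x hx).trans (Real.le_norm_self _)

lemma PowerBoundNearZero.eventually_forall_le {E : Type*} [NormedAddCommGroup E] [ProperSpace E]
    {φ : ℝ → ℝ → ℝ} {u v : E → ℝ} {a b p q α κ : ℝ} (hφ : PowerBoundNearZero φ p q)
    (ha : 0 < a) (hb : 0 < b) (hp : 0 ≤ p) (hq : 0 ≤ q) (hα : α < a * p + b * q) (hκ : 0 < κ)
    (hu : u =O[cocompact E] fun x => ‖x‖ ^ (-a)) (hv : v =O[cocompact E] fun x => ‖x‖ ^ (-b)) :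
    ∀ᶠ x in cocompact E, ∀ w ∈ Ioc 0 (u x), ∀ z ∈ Ioc 0 (v x), φ w z ≤ κ * ‖x‖ ^ (-α) := by
  obtain ⟨A, δ, hδ, hA⟩ := hφ
  have h_nonneg (c : ℝ) : ∀ᶠ x in cocompact E, (0 : E → ℝ) x ≤ ‖x‖ ^ (-c) :=
    .of_forall fun x => by positivity
  have h_product : (fun x => |A| * (u x ^ p * v x ^ q)) =o[cocompact E] fun x => ‖x‖ ^ (-α) := by
    refine (((hu.rpow hp (h_nonneg a)).mul (hv.rpow hq (h_nonneg b))).const_mul_left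
      |A|).trans_isLittleO ?_
    simp only [← Real.rpow_mul (norm_nonneg _)]
    have h_exp : -a * p + -b * q < -α := by linarith
    refine ((isLittleO_rpow_rpow_atTop h_exp).comp_tendsto
      tendsto_norm_cocompact_atTop).congr' ?_ .rfl
    filter_upwards [tendsto_norm_cocompact_atTop.eventually_gt_atTop 0] with x hx
    exact Real.rpow_add hx _ _
  filter_upwards [h_product.bound hκ,
    (tendsto_zero_of_isBigO_norm_rpow_neg ha hu).eventually_lt_const hδ,
    (tendsto_zero_of_isBigO_norm_rpow_neg hb hv).eventually_lt_const hδ]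
    with x hx hux hvx w ⟨hw, hwu⟩ z ⟨hz, hzv⟩
  calc φ w z ≤ A * (w ^ p * z ^ q) := hA w ⟨hw, hwu.trans_lt hux⟩ z ⟨hz, hzv.trans_lt hvx⟩
    _ ≤ |A| * (u x ^ p * v x ^ q) := by
      have := hw.le.trans hwu
      gcongr
      exact le_abs_self A
    _ ≤ κ * ‖x‖ ^ (-α) := by
      refine (le_abs_self _).trans (hx.trans_eq ?_)
      rw [Real.norm_of_nonneg (by positivity)]

/-- A cooperative `C¹` nonlinearity on the closed quadrant whose partial derivatives satisfy the
growth conditions near the origin of a term of type `w ^ p * z ^ q`. The first argument of `f` is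
the unknown whose equation `f` governs. -/
structure CooperativeNonlinearity (f : ℝ → ℝ → ℝ) (p q : ℝ) : Prop where
  contDiffOn : ContDiffOn ℝ 1 (fun z : ℝ × ℝ => f z.1 z.2) (Ici 0 ×ˢ Ici 0)
  deriv_fst_le : PowerBoundNearZero (fun w z => deriv (fun t => f t z) w) (p - 1) q
  deriv_snd_le : PowerBoundNearZero (fun w z => deriv (f w) z) p (q - 1)
  deriv_snd_pos : ∀ w z, 0 < w → 0 < z → 0 < deriv (f w) z

namespace CooperativeNonlinearity

variable {f : ℝ → ℝ → ℝ} {p q w z : ℝ}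

lemma differentiableAt (hf : CooperativeNonlinearity f p q) (hw : 0 < w) (hz : 0 < z) :
    DifferentiableAt ℝ (fun z : ℝ × ℝ => f z.1 z.2) (w, z) :=
  (hf.contDiffOn.contDiffAt (prod_mem_nhds (Ici_mem_nhds hw) (Ici_mem_nhds hz))).differentiableAt
    one_ne_zero

lemma differentiableAt_fst (hf : CooperativeNonlinearity f p q) (hw : 0 < w) (hz : 0 < z) :
    DifferentiableAt ℝ (fun t => f t z) w :=
  (hf.differentiableAt hw hz).comp w (f := fun t => (t, z)) (by fun_prop)

lemma differentiableAt_snd (hf : CooperativeNonlinearity f p q) (hw : 0 < w) (hz : 0 < z) :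
    DifferentiableAt ℝ (f w) z :=
  (hf.differentiableAt hw hz).comp z (f := fun t => (w, t)) (by fun_prop)

lemma strictMonoOn (hf : CooperativeNonlinearity f p q) (hw : 0 < w) :
    StrictMonoOn (f w) (Ioi 0) :=
  strictMonoOn_of_deriv_pos (convex_Ioi 0)
    (fun _ hz => (hf.differentiableAt_snd hw hz).continuousAt.continuousWithinAt)
    fun z hz => hf.deriv_snd_pos w z hw (interior_subset hz)

lemma exists_forall_deriv_le (hf : CooperativeNonlinearity f p q) (M : ℝ) :
    ∃ K, 0 ≤ K ∧ ∀ w ∈ Ioc 0 M, ∀ z ∈ Ioc 0 M,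
      deriv (fun t => f t z) w ≤ K ∧ deriv (f w) z ≤ K := by
  have hf_square : ContDiffOn ℝ 1 (fun z : ℝ × ℝ => f z.1 z.2)
      (Icc 0 (M + 1) ×ˢ Icc 0 (M + 1)) :=
    hf.contDiffOn.mono (prod_mono Icc_subset_Ici_self Icc_subset_Ici_self)
  obtain ⟨K, hK⟩ := hf_square.exists_lipschitzOnWith one_ne_zero
    ((convex_Icc _ _).prod (convex_Icc _ _)) (isCompact_Icc.prod isCompact_Icc)
  have hmem {t : ℝ} (ht : t ∈ Ioc 0 M) : t ∈ Icc 0 (M + 1) := ⟨ht.1.le, by linarith [ht.2]⟩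
  have hnhds {t : ℝ} (ht : t ∈ Ioc 0 M) : Icc 0 (M + 1) ∈ 𝓝 t :=
    Icc_mem_nhds ht.1 (by linarith [ht.2])
  refine ⟨K, K.2, fun w hw z hz => ⟨?_, ?_⟩⟩
  · refine (Real.le_norm_self _).trans (norm_deriv_le_of_lipschitzOn (hnhds hw) ?_)
    simpa [Function.comp_def] using hK.comp (LipschitzWith.prodMk_right z).lipschitzOnWith
      fun t ht => ⟨ht, hmem hz⟩
  · refine (Real.le_norm_self _).trans (norm_deriv_le_of_lipschitzOn (hnhds hz) ?_)
    simpa [Function.comp_def] using hK.comp (LipschitzWith.prodMk_left w).lipschitzOnWith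
      fun t ht => ⟨hmem hw, ht⟩

lemma sub_le_of_forall_deriv_le (hf : CooperativeNonlinearity f p q) {w' z' B : ℝ}
    (hw' : 0 < w') (hw : w' ≤ w) (hz' : 0 < z') (hz : z' ≤ z)
    (hB : ∀ s ∈ Ioc 0 w, ∀ t ∈ Ioc 0 z, deriv (fun s => f s t) s ≤ B ∧ deriv (f s) t ≤ B) :
    f w z - f w' z' ≤ B * (w - w') + B * (z - z') := by
  have hz_pos := hz'.trans_le hz
  have h_fst : f w z - f w' z ≤ B * (w - w') :=
    (convex_Icc w' w).image_sub_le_mul_sub_of_deriv_le (f := fun s => f s z)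
      (fun s hs => (hf.differentiableAt_fst (hw'.trans_le hs.1) hz_pos).continuousAt
        |>.continuousWithinAt)
      (fun s hs => (hf.differentiableAt_fst (hw'.trans_le (interior_subset hs).1) hz_pos)
        |>.differentiableWithinAt)
      (fun s hs => (hB s ⟨hw'.trans_le (interior_subset hs).1, (interior_subset hs).2⟩ z
        ⟨hz_pos, le_rfl⟩).1)
      w' (left_mem_Icc.2 hw) w (right_mem_Icc.2 hw) hw
  have h_snd : f w' z - f w' z' ≤ B * (z - z') :=
    (convex_Icc z' z).image_sub_le_mul_sub_of_deriv_le
      (fun t ht => (hf.differentiableAt_snd hw' (hz'.trans_le ht.1)).continuousAt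
        |>.continuousWithinAt)
      (fun t ht => (hf.differentiableAt_snd hw' (hz'.trans_le (interior_subset ht).1))
        |>.differentiableWithinAt)
      (fun t ht => (hB w' ⟨hw', hw⟩ t
        ⟨hz'.trans_le (interior_subset ht).1, (interior_subset ht).2⟩).2)
      z' (left_mem_Icc.2 hz) z (right_mem_Icc.2 hz) hz
  linarith

lemma dropBound_of_forall_deriv_le {X : Type*} {u v : X → ℝ} {B : ℝ} {x y : X}
    (hf : CooperativeNonlinearity f p q) (hu : ∀ x, 0 < u x) (hv : ∀ x, 0 < v x) (hB₀ : 0 ≤ B)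
    (hB : ∀ w ∈ Ioc 0 (u x), ∀ z ∈ Ioc 0 (v x),
      deriv (fun t => f t z) w ≤ B ∧ deriv (f w) z ≤ B) :
    DropBound f u v (2 * B) x y := by
  intro hu_drop huv
  have hz : 0 < min (v x) (v y) := lt_min (hv x) (hv y)
  have h_mono : f (u y) (min (v x) (v y)) ≤ f (u y) (v y) :=
    (hf.strictMonoOn (hu y)).monotoneOn hz (hv y) (min_le_right _ _)
  have h_sub := hf.sub_le_of_forall_deriv_le (hu y) hu_drop.le hz (min_le_left _ _) hB
  have h_drop : v x - min (v x) (v y) ≤ u x - u y := by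
    rcases min_choice (v x) (v y) with h | h <;> rw [h] <;> linarith
  linarith [mul_le_mul_of_nonneg_left h_drop hB₀]

variable {E : Type*} [NormedAddCommGroup E] [InnerProductSpace ℝ E] [FiniteDimensional ℝ E]
  [MeasurableSpace E] [BorelSpace E] {u v : E → ℝ} {a b α C : ℝ}

lemma coupledSolution (hf : CooperativeNonlinearity f p q) (ha : 0 < a) (hb : 0 < b)
    (hp : 1 ≤ p) (hq : 1 ≤ q) (hαa : α < a * p + b * q - a) (hαb : α < a * p + b * q - b)
    (hu_cont : Continuous u) (hv_cont : Continuous v) (hu_pos : ∀ x, 0 < u x)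
    (hv_pos : ∀ x, 0 < v x) (hu : u =O[cocompact E] fun x => ‖x‖ ^ (-a))
    (hv : v =O[cocompact E] fun x => ‖x‖ ^ (-b))
    (hL : ∀ x, HasFracLapAt α C u (f (u x) (v x)) x) : CoupledSolution α C f u v where
  continuous := hu_cont
  pos := hu_pos
  tendsto_zero := tendsto_zero_of_isBigO_norm_rpow_neg ha hu
  hasFracLapAt := hL
  strictMonoOn := fun _ hw => hf.strictMonoOn hw
  exists_dropBound := by
    obtain ⟨Mu, hMu⟩ := exists_forall_abs_le_of_tendsto_cocompact hu_cont
      (tendsto_zero_of_isBigO_norm_rpow_neg ha hu)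
    obtain ⟨Mv, hMv⟩ := exists_forall_abs_le_of_tendsto_cocompact hv_cont
      (tendsto_zero_of_isBigO_norm_rpow_neg hb hv)
    obtain ⟨K, hK₀, hK⟩ := hf.exists_forall_deriv_le (max Mu Mv)
    refine ⟨2 * K, fun x y => hf.dropBound_of_forall_deriv_le hu_pos hv_pos hK₀ ?_⟩
    exact fun w hw z hz => hK
      w ⟨hw.1, hw.2.trans ((le_abs_self _).trans ((hMu x).trans (le_max_left _ _)))⟩
      z ⟨hz.1, hz.2.trans ((le_abs_self _).trans ((hMv x).trans (le_max_right _ _)))⟩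
  eventually_dropBound := by
    intro κ hκ
    have hα_fst : α < a * (p - 1) + b * q := by linarith
    have hα_snd : α < a * p + b * (q - 1) := by linarith
    filter_upwards [
      hf.deriv_fst_le.eventually_forall_le ha hb (sub_nonneg.2 hp) (zero_le_one.trans hq) hα_fst
        (half_pos hκ) hu hv,
      hf.deriv_snd_le.eventually_forall_le ha hb (zero_le_one.trans hp) (sub_nonneg.2 hq) hα_snd
        (half_pos hκ) hu hv] with x h_fst h_snd y
    rw [show κ * ‖x‖ ^ (-α) = 2 * (κ / 2 * ‖x‖ ^ (-α)) by ring]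
    exact hf.dropBound_of_forall_deriv_le hu_pos hv_pos (by positivity)
      fun w hw z hz => ⟨h_fst w hw z hz, h_snd w hw z hz⟩

end CooperativeNonlinearity

end Nonlinearity

theorem radial_symmetry_fractional_system_general {E : Type*} [NormedAddCommGroup E]
    [InnerProductSpace ℝ E] [FiniteDimensional ℝ E] [MeasurableSpace E] [BorelSpace E]
    {α C a b p q r s : ℝ} (hα : 0 < α) (hC : 0 < C) (ha : 0 < a) (hb : 0 < b)
    (hp : 1 ≤ p) (hq : 1 ≤ q) (hr : 1 ≤ r) (hs : 1 ≤ s) {f g : ℝ → ℝ → ℝ}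
    (hf : CooperativeNonlinearity f p q) (hg : CooperativeNonlinearity (flip g) s r)
    {u v : E → ℝ} (hu_cont : Continuous u) (hv_cont : Continuous v)
    (hu_pos : ∀ x, 0 < u x) (hv_pos : ∀ x, 0 < v x)
    (hu_lap : ∀ x, HasFracLapAt α C u (f (u x) (v x)) x)
    (hv_lap : ∀ x, HasFracLapAt α C v (g (u x) (v x)) x)
    (hu : u =O[cocompact E] fun x => ‖x‖ ^ (-a)) (hv : v =O[cocompact E] fun x => ‖x‖ ^ (-b))
    (h_exp : α < a * p + b * q - a ∧ α < a * p + b * q - b ∧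
      α < a * r + b * s - a ∧ α < a * r + b * s - b) :
    ∃ x₀, ∀ x y, ‖x - x₀‖ = ‖y - x₀‖ → u x = u y ∧ v x = v y :=
  have hu_sol : CoupledSolution α C f u v := hf.coupledSolution ha hb hp hq h_exp.1 h_exp.2.1
    hu_cont hv_cont hu_pos hv_pos hu hv hu_lap
  have hv_sol : CoupledSolution α C (flip g) v u := hg.coupledSolution hb ha hs hr
    (by linarith [h_exp.2.2.2]) (by linarith [h_exp.2.2.1]) hv_cont hu_cont hv_pos hu_pos hv hu
    hv_lap
  hu_sol.exists_radial hv_sol hα hC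

/-- Main symmetry theorem (Theorem 1.1): decaying positive solutions of the
coupled fractional Laplacian system are radially symmetric about some point. -/
theorem radial_symmetry_fractional_system {n : ℕ} [NeZero n] (α C a b p q r s : ℝ)
    (hα : α ∈ Ioo (0 : ℝ) 2) (hC : 0 < C) (ha : 0 < a) (hb : 0 < b)
    (hp : 1 ≤ p) (hq : 1 ≤ q) (hr : 1 ≤ r) (hs : 1 ≤ s)
    (f g : ℝ → ℝ → ℝ)
    (hf : ContDiffOn ℝ 1 (fun z : ℝ × ℝ => f z.1 z.2) (Ici (0:ℝ) ×ˢ Ici (0:ℝ)))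
    (hg : ContDiffOn ℝ 1 (fun z : ℝ × ℝ => g z.1 z.2) (Ici (0:ℝ) ×ˢ Ici (0:ℝ)))
    (u v : EuclideanSpace ℝ (Fin n) → ℝ)
    (hupos : ∀ x, 0 < u x) (hvpos : ∀ x, 0 < v x)
    (huL : MemLalpha n α u) (hvL : MemLalpha n α v)
    (huC : C11loc u) (hvC : C11loc v)
    (hequ : IsFracLap n α C u (fun x => f (u x) (v x)))
    (heqv : IsFracLap n α C v (fun x => g (u x) (v x)))
    (hdecu : ∃ R : ℝ, ∀ x, R < ‖x‖ → u x ≤ ‖x‖ ^ (-a))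
    (hdecv : ∃ R : ℝ, ∀ x, R < ‖x‖ → v x ≤ ‖x‖ ^ (-b))
    (hii : ∃ δ > (0:ℝ), ∀ w z : ℝ, 0 < w → 0 < z → w + z < δ →
      deriv (fun t => f t z) w ≤ w ^ (p - 1) * z ^ q ∧
      deriv (fun t => g w t) z ≤ w ^ r * z ^ (s - 1))
    (hiii : ∃ δ > (0:ℝ), ∀ w z : ℝ, 0 < w → 0 < z → w + z < δ →
      deriv (fun t => f w t) z ≤ w ^ p * z ^ (q - 1) ∧
      deriv (fun t => g t z) w ≤ w ^ (r - 1) * z ^ s)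
    (hiv : ∀ w z : ℝ, 0 < w → 0 < z →
      0 < deriv (fun t => f w t) z ∧ 0 < deriv (fun t => g t z) w)
    (hv5 : α < a * p + b * q - a ∧ α < a * p + b * q - b ∧
      α < a * r + b * s - a ∧ α < a * r + b * s - b) :
    ∃ x₀ : EuclideanSpace ℝ (Fin n), ∀ x y : EuclideanSpace ℝ (Fin n),
      ‖x - x₀‖ = ‖y - x₀‖ → u x = u y ∧ v x = v y := by
  obtain ⟨δ₁, hδ₁, hii⟩ := hii
  obtain ⟨δ₂, hδ₂, hiii⟩ := hiii
  have hf_coop : CooperativeNonlinearity f p q :=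
    { contDiffOn := hf
      deriv_fst_le := ⟨1, δ₁ / 2, half_pos hδ₁, fun w hw z hz =>
        ((hii w z hw.1 hz.1 (by linarith [hw.2, hz.2])).1).trans_eq (one_mul _).symm⟩
      deriv_snd_le := ⟨1, δ₂ / 2, half_pos hδ₂, fun w hw z hz =>
        ((hiii w z hw.1 hz.1 (by linarith [hw.2, hz.2])).1).trans_eq (one_mul _).symm⟩
      deriv_snd_pos := fun w z hw hz => (hiv w z hw hz).1 }
  have hg_coop : CooperativeNonlinearity (flip g) s r :=
    { contDiffOn := hg.comp (contDiff_snd.prodMk contDiff_fst).contDiffOn fun _ hz => And.symm hz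
      deriv_fst_le := ⟨1, δ₁ / 2, half_pos hδ₁, fun z hz w hw =>
        ((hii w z hw.1 hz.1 (by linarith [hw.2, hz.2])).2).trans_eq (by ring)⟩
      deriv_snd_le := ⟨1, δ₂ / 2, half_pos hδ₂, fun z hz w hw =>
        ((hiii w z hw.1 hz.1 (by linarith [hw.2, hz.2])).2).trans_eq (by ring)⟩
      deriv_snd_pos := fun z w hz hw => (hiv w z hw hz).2 }
  exact radial_symmetry_fractional_system_general hα.1 hC ha hb hp hq hr hs hf_coop hg_coop
    huC.1.continuous hvC.1.continuous hupos hvpos hequ.hasFracLapAt heqv.hasFracLapAt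
    (isBigO_cocompact_of_le hupos hdecu) (isBigO_cocompact_of_le hvpos hdecv) hv5
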